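/- Let $n \geq 3$ and $0 < r < R/2$. Suppose $v \in C^2$ satisfies $-\Delta v = f \geq 0$ on the annulus $B_R(0) \setminus \bar B_r(0)$ and $v \geq 0$ on the boundary $\partial(B_R \setminus B_r)$. Then for any $\frac{2r}{R} < \rho_0 < \rho_1 < \rho_2 < 1$, there exists $C > 1$ depending only on $n, \rho_0, \rho_1, \rho_2$ such that $\inf_{\rho_1 R \leq |x| \leq \rho_2 R} v(x) \geq \frac{1}{C R^{n-2}} \int_{2r \leq |y| \leq \rho_0 R} f(y)\,dy$. -/

import Mathlib

open Metric Set MeasureTheory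

/-- The (flat) Laplacian, as the sum of the second partial derivatives. -/
noncomputable def lap {n : ℕ} (u : EuclideanSpace ℝ (Fin n) → ℝ)
    (x : EuclideanSpace ℝ (Fin n)) : ℝ :=
  ∑ i, fderiv ℝ (fun y => fderiv ℝ u y (EuclideanSpace.single i 1)) x
    (EuclideanSpace.single i 1)

/-- Euclidean space, abbreviated. -/
abbrev EE (n : ℕ) := EuclideanSpace ℝ (Fin n)

/-- The basis vectors. -/
noncomputable abbrev ee {n : ℕ} (i : Fin n) : EE n := EuclideanSpace.single i 1

lemma cont_mul_of_tsupport {n : ℕ} {U : Set (EE n)} (hU : IsOpen U) {a p : EE n → ℝ}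
    (ha : ContinuousOn a U) (hp : Continuous p) (hs : tsupport p ⊆ U) :
    Continuous (fun y => a y * p y) := by
  apply continuous_of_tsupport
  intro x hx
  have hx' : x ∈ tsupport p := (tsupport_mul_subset_right (f := a) (g := p)) hx
  exact (ha.continuousAt (hU.mem_nhds (hs hx'))).mul hp.continuousAt

lemma integrable_mul_of_tsupport {n : ℕ} {U : Set (EE n)} (hU : IsOpen U) {a p : EE n → ℝ}
    (ha : ContinuousOn a U) (hp : Continuous p) (hc : HasCompactSupport p)
    (hs : tsupport p ⊆ U) :
    Integrable (fun y => a y * p y) :=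
  (cont_mul_of_tsupport hU ha hp hs).integrable_of_hasCompactSupport hc.mul_left

lemma fderiv_apply_contOn {n : ℕ} {U : Set (EE n)} (hU : IsOpen U) {a : EE n → ℝ}
    (ha : ContDiffOn ℝ 1 a U) (e : EE n) : ContinuousOn (fun y => fderiv ℝ a y e) U :=
  (ha.continuousOn_fderiv_of_isOpen hU le_rfl).clm_apply continuousOn_const

lemma fderiv_apply_contDiffOn {n : ℕ} {U : Set (EE n)} (hU : IsOpen U) {a : EE n → ℝ}
    (ha : ContDiffOn ℝ 2 a U) (e : EE n) : ContDiffOn ℝ 1 (fun y => fderiv ℝ a y e) U :=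
  (ha.fderiv_of_isOpen hU (m := 1) (by norm_num)).clm_apply contDiffOn_const

lemma ibp {n : ℕ} {U : Set (EE n)} (hU : IsOpen U) {a p : EE n → ℝ}
    (ha : ContDiffOn ℝ 1 a U) (hp : ContDiff ℝ 1 p) (hc : HasCompactSupport p)
    (hs : tsupport p ⊆ U) (e : EE n) :
    ∫ y, a y * fderiv ℝ p y e = - ∫ y, fderiv ℝ a y e * p y := by
  have hs' : tsupport (fun y => fderiv ℝ p y e) ⊆ tsupport p := tsupport_fderiv_apply_subset ℝ e
  have hp' : Continuous (fun y => fderiv ℝ p y e) :=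
    (hp.continuous_fderiv one_ne_zero).clm_apply continuous_const
  apply integral_mul_fderiv_eq_neg_fderiv_mul_of_integrable
  · exact integrable_mul_of_tsupport hU (fderiv_apply_contOn hU ha e) hp.continuous hc hs
  · exact integrable_mul_of_tsupport hU ha.continuousOn hp'
      (hc.fderiv_apply (𝕜 := ℝ) e) (hs'.trans hs)
  · exact integrable_mul_of_tsupport hU ha.continuousOn hp.continuous hc hs
  · intro x hx
    exact (ha.differentiableOn one_ne_zero).differentiableAt (hU.mem_nhds (hs hx))
  · intro x _
    exact hp.differentiable one_ne_zero x

lemma lap_contOn {n : ℕ} {U : Set (EE n)} (hU : IsOpen U) {a : EE n → ℝ}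
    (ha : ContDiffOn ℝ 2 a U) : ContinuousOn (lap a) U := by
  unfold lap
  refine continuousOn_finsetSum _ fun i _ => ?_
  exact fderiv_apply_contOn hU (fderiv_apply_contDiffOn hU ha _) _

lemma green {n : ℕ} {U : Set (EE n)} (hU : IsOpen U) {a p : EE n → ℝ}
    (ha : ContDiffOn ℝ 2 a U) (hp : ContDiff ℝ 2 p) (hc : HasCompactSupport p)
    (hs : tsupport p ⊆ U) :
    ∫ y, a y * lap p y = ∫ y, lap a y * p y := by
  have hs' : ∀ e, tsupport (fun y => fderiv ℝ p y e) ⊆ tsupport p :=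
    fun e => tsupport_fderiv_apply_subset ℝ e
  have hp' : ∀ e, ContDiff ℝ 1 (fun y => fderiv ℝ p y e) := fun e =>
    (hp.fderiv_right (m := 1) (by norm_num)).clm_apply contDiff_const
  have hc' : ∀ e, HasCompactSupport (fun y => fderiv ℝ p y e) := fun e =>
    hc.fderiv_apply (𝕜 := ℝ) e
  have ha1 : ContDiffOn ℝ 1 a U := ha.of_le (by norm_num)
  simp only [lap, Finset.mul_sum, Finset.sum_mul]
  rw [integral_finsetSum, integral_finsetSum]
  · refine Finset.sum_congr rfl fun i _ => ?_
    rw [ibp hU ha1 (hp' _) (hc' _) ((hs' _).trans hs),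
      ibp hU (fderiv_apply_contDiffOn hU ha _) (hp.of_le (by norm_num)) hc hs, neg_neg]
  · intro i _
    exact integrable_mul_of_tsupport hU
      (fderiv_apply_contOn hU (fderiv_apply_contDiffOn hU ha _) _) hp.continuous hc hs
  · intro i _
    refine integrable_mul_of_tsupport hU ha.continuousOn
      (((hp' _).continuous_fderiv one_ne_zero).clm_apply continuous_const)
      ((hc' _).fderiv_apply (𝕜 := ℝ) _) ?_
    exact (tsupport_fderiv_apply_subset ℝ _).trans ((hs' _).trans hs)

section radial
variable {n : ℕ} {G G1 G2 : ℝ → ℝ} {d : ℝ}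

lemma radial_hasFDerivAt (hd : 0 < d) (h1 : ∀ s, -d < s → HasDerivAt G (G1 s) s) (y : EE n) :
    HasFDerivAt (fun y : EE n => G (‖y‖ ^ 2)) (G1 (‖y‖ ^ 2) • (2 • innerSL ℝ y)) y :=
  (h1 _ (by nlinarith [sq_nonneg ‖y‖])).comp_hasFDerivAt y
    (hasStrictFDerivAt_norm_sq y).hasFDerivAt

lemma radial_fderiv (hd : 0 < d) (h1 : ∀ s, -d < s → HasDerivAt G (G1 s) s) (y : EE n)
    (i : Fin n) :
    fderiv ℝ (fun y : EE n => G (‖y‖ ^ 2)) y (ee i) = G1 (‖y‖ ^ 2) * (2 * y i) := by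
  rw [(radial_hasFDerivAt hd h1 y).fderiv]
  simp [ee, EuclideanSpace.inner_single_right]

lemma radial_lap (hd : 0 < d) (h1 : ∀ s, -d < s → HasDerivAt G (G1 s) s)
    (h2 : ∀ s, -d < s → HasDerivAt G1 (G2 s) s) (y : EE n) :
    lap (fun y : EE n => G (‖y‖ ^ 2)) y = 4 * ‖y‖ ^ 2 * G2 (‖y‖ ^ 2) + 2 * n * G1 (‖y‖ ^ 2) := by
  unfold lap
  have : ∀ i : Fin n, fderiv ℝ (fun y : EE n => fderiv ℝ (fun y : EE n => G (‖y‖ ^ 2)) y (ee i)) y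
      (ee i) = 4 * (y i) ^ 2 * G2 (‖y‖ ^ 2) + 2 * G1 (‖y‖ ^ 2) := by
    intro i
    simp_rw [radial_fderiv hd h1]
    have hi : HasFDerivAt (fun y : EE n => 2 * y i) ((2 : ℝ) • (EuclideanSpace.proj i : EE n →L[ℝ] ℝ)) y :=
      (EuclideanSpace.proj i : EE n →L[ℝ] ℝ).hasFDerivAt.const_mul 2
    have hm := ((radial_hasFDerivAt hd h2 y).mul hi).fderiv
    change fderiv ℝ (fun y : EE n => G1 (‖y‖ ^ 2) * (2 * y i)) y = _ at hm
    rw [hm]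
    simp [ee, EuclideanSpace.inner_single_right]
    ring
  rw [Finset.sum_congr rfl fun i _ => this i, Finset.sum_add_distrib, ← Finset.sum_mul,
    ← Finset.mul_sum, EuclideanSpace.norm_sq_eq]
  simp
  ring

lemma radial_contDiff (hd : 0 < d) (h1 : ∀ s, -d < s → HasDerivAt G (G1 s) s)
    (h2 : ∀ s, -d < s → HasDerivAt G1 (G2 s) s) (h3 : ContinuousOn G2 (Ioi (-d))) :
    ContDiff ℝ 2 (fun y : EE n => G (‖y‖ ^ 2)) := by
  have hG1 : ContDiffOn ℝ 1 G1 (Ioi (-d)) := by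
    rw [show (1 : WithTop ℕ∞) = 0 + 1 by simp, contDiffOn_succ_iff_deriv_of_isOpen isOpen_Ioi]
    refine ⟨fun s hs => (h2 s hs).differentiableAt.differentiableWithinAt, by simp, ?_⟩
    exact contDiffOn_zero.2 (h3.congr fun s hs => (h2 s hs).deriv)
  have hG : ContDiffOn ℝ 2 G (Ioi (-d)) := by
    rw [show (2 : WithTop ℕ∞) = 1 + 1 by norm_num, contDiffOn_succ_iff_deriv_of_isOpen isOpen_Ioi]
    refine ⟨fun s hs => (h1 s hs).differentiableAt.differentiableWithinAt, by simp, ?_⟩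
    exact hG1.congr fun s hs => (h1 s hs).deriv
  refine hG.comp_contDiff (contDiff_norm_sq ℝ) fun y => ?_
  simp only [mem_Ioi]
  nlinarith [sq_nonneg ‖y‖]

end radial

lemma hasDerivAt_maxpow (k : ℕ) (hk : 1 ≤ k) (t : ℝ) :
    HasDerivAt (fun t : ℝ => (max t 0) ^ (k + 1)) ((k + 1) * (max t 0) ^ k) t := by
  rcases lt_trichotomy t 0 with h | h | h
  · rw [max_eq_right h.le, zero_pow (by omega), mul_zero]
    refine (hasDerivAt_const t (0 : ℝ)).congr_of_eventuallyEq ?_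
    filter_upwards [gt_mem_nhds h] with s hs
    rw [max_eq_right hs.le, zero_pow (by omega)]
  · subst h
    rw [max_self, zero_pow (by omega), mul_zero]
    rw [hasDerivAt_iff_isLittleO_nhds_zero]
    have : (fun h : ℝ => h ^ (k + 1)) =o[nhds 0] fun h => h := by
      simpa using (Asymptotics.isLittleO_pow_pow (𝕜 := ℝ) (m := 1) (n := k + 1) (by omega))
    refine Asymptotics.IsBigO.trans_isLittleO (Asymptotics.IsBigO.of_bound 1 ?_) this
    filter_upwards with s
    simp only [zero_add, max_self, smul_zero, sub_zero, one_mul, norm_pow, Real.norm_eq_abs]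
    rw [zero_pow (by omega), sub_zero, abs_pow]
    apply pow_le_pow_left₀ (abs_nonneg _)
    rw [abs_of_nonneg (le_max_right _ _)]
    exact max_le (le_abs_self _) (abs_nonneg _)
  · rw [max_eq_left h.le]
    have := hasDerivAt_pow (k + 1) t
    simp only [Nat.add_sub_cancel] at this
    push_cast at this
    refine this.congr_of_eventuallyEq ?_
    filter_upwards [lt_mem_nhds h] with s hs
    rw [max_eq_left hs.le]

lemma lap_add {n : ℕ} {U : Set (EE n)} (hU : IsOpen U) {a b : EE n → ℝ}
    (ha : ContDiffOn ℝ 2 a U) (hb : ContDiffOn ℝ 2 b U) {x : EE n} (hx : x ∈ U) :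
    lap (fun y => a y + b y) x = lap a x + lap b x := by
  unfold lap
  rw [← Finset.sum_add_distrib]
  refine Finset.sum_congr rfl fun i _ => ?_
  have h1 : (fun y => fderiv ℝ (fun y => a y + b y) y (ee i)) =ᶠ[nhds x]
      fun y => fderiv ℝ a y (ee i) + fderiv ℝ b y (ee i) := by
    filter_upwards [hU.mem_nhds hx] with y hy
    rw [fderiv_fun_add ((ha.differentiableOn two_ne_zero).differentiableAt (hU.mem_nhds hy))
      ((hb.differentiableOn two_ne_zero).differentiableAt (hU.mem_nhds hy))]
    rfl
  rw [h1.fderiv_eq, fderiv_fun_add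
    (((fderiv_apply_contDiffOn hU ha _).differentiableOn one_ne_zero).differentiableAt
      (hU.mem_nhds hx))
    (((fderiv_apply_contDiffOn hU hb _).differentiableOn one_ne_zero).differentiableAt
      (hU.mem_nhds hx))]
  rfl

lemma lap_comp_smul {n : ℕ} (u : EE n → ℝ) (c : ℝ) (x : EE n) :
    lap (fun y => u (c • y)) x = c ^ 2 * lap u (c • x) := by
  unfold lap
  rw [Finset.mul_sum]
  refine Finset.sum_congr rfl fun i _ => ?_
  have h1 : (fun y => fderiv ℝ (fun y => u (c • y)) y (ee i)) =
      fun y => c * (fun z => fderiv ℝ u z (ee i)) (c • y) := by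
    ext y
    rw [fderiv_comp_smul]
    rfl
  rw [h1]
  have h2 := fderiv_comp_smul (𝕜 := ℝ) (f := fun z => fderiv ℝ u z (ee i)) (x := x) c
  have h3 := fderiv_const_smul_field (𝕜 := ℝ) (f := fun y => fderiv ℝ u (c • y) (ee i)) c
  replace h3 := congrFun h3 x
  change fderiv ℝ (fun y => c * fderiv ℝ u (c • y) (ee i)) x = _ at h3
  change fderiv ℝ (fun y => c * fderiv ℝ u (c • y) (ee i)) x (ee i) = _
  rw [h3]
  change c • (fderiv ℝ (fun y => fderiv ℝ u (c • y) (ee i)) x) (ee i) = _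
  rw [h2]
  simp
  ring

lemma lap_comp_add {n : ℕ} (u : EE n → ℝ) (w : EE n) (x : EE n) :
    lap (fun y => u (w + y)) x = lap u (w + x) := by
  unfold lap
  refine Finset.sum_congr rfl fun i _ => ?_
  have h1 : (fun y => fderiv ℝ (fun y => u (w + y)) y (ee i)) =
      fun y => (fun z => fderiv ℝ u z (ee i)) (w + y) := by
    ext y
    rw [fderiv_comp_add_left]
  rw [h1, fderiv_comp_add_left (f := fun z => fderiv ℝ u z (ee i))]

lemma lap_nonneg_of_isLocalMin {n : ℕ} {U : Set (EE n)} (hU : IsOpen U) {g : EE n → ℝ}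
    (hg : ContDiffOn ℝ 2 g U) {x : EE n} (hx : x ∈ U) (hm : IsLocalMin g x) :
    0 ≤ lap g x := by
  unfold lap
  refine Finset.sum_nonneg fun i _ => ?_
  by_contra! hneg
  set q : ℝ → ℝ := fun t => g (x + t • ee i) with hq
  have hl : ∀ t : ℝ, HasDerivAt (fun t : ℝ => x + t • ee i) (ee i) t := fun t => by
    simpa using ((hasDerivAt_id t).smul_const (ee i)).const_add x
  have hlc : ContinuousAt (fun t : ℝ => x + t • ee i) 0 := (hl 0).continuousAt
  have hx0 : x + (0 : ℝ) • ee i = x := by simp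
  have hev : ∀ᶠ t in nhds (0 : ℝ), x + t • ee i ∈ U := by
    apply hlc.eventually_mem
    rw [hx0]
    exact hU.mem_nhds hx
  have hd : deriv q =ᶠ[nhds 0] fun t => fderiv ℝ g (x + t • ee i) (ee i) := by
    filter_upwards [hev] with t ht
    exact (((hg.differentiableOn two_ne_zero).differentiableAt
      (hU.mem_nhds ht)).hasFDerivAt.comp_hasDerivAt t (hl t)).deriv
  have hdd : deriv (deriv q) 0 = fderiv ℝ (fun y => fderiv ℝ g y (ee i)) x (ee i) := by
    rw [hd.deriv_eq]
    have h := ((fderiv_apply_contDiffOn hU hg (ee i)).differentiableOn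
      one_ne_zero).differentiableAt (hU.mem_nhds hx)
    have h' : HasFDerivAt (fun y => fderiv ℝ g y (ee i))
      (fderiv ℝ (fun y => fderiv ℝ g y (ee i)) x) (x + (0 : ℝ) • ee i) := by
      rw [hx0]; exact h.hasFDerivAt
    exact (h'.comp_hasDerivAt (0 : ℝ) (hl 0)).deriv
  have hqmin : IsLocalMin q 0 := by
    have : ∀ᶠ y in nhds (x + (0 : ℝ) • ee i), g x ≤ g y := by rw [hx0]; exact hm
    filter_upwards [hlc.eventually this] with t ht
    simpa [hq] using ht
  have hqc : ContinuousAt q 0 := by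
    have : ContinuousAt g (x + (0 : ℝ) • ee i) := by
      rw [hx0]; exact hg.continuousOn.continuousAt (hU.mem_nhds hx)
    exact ContinuousAt.comp (g := g) (f := fun t : ℝ => x + t • ee i) this hlc
  have hqmax : IsLocalMax q 0 :=
    isLocalMax_of_deriv_deriv_neg (by rw [hdd]; exact hneg) hqmin.deriv_eq_zero hqc
  have hconst : q =ᶠ[nhds 0] fun _ => q 0 := by
    filter_upwards [hqmin, hqmax] with t h1 h2
    exact le_antisymm h2 h1
  have h0 : deriv q =ᶠ[nhds 0] fun _ => 0 := by
    have := hconst.deriv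
    simpa using this
  have : deriv (deriv q) 0 = 0 := by
    rw [h0.deriv_eq]; simp
  rw [hdd] at this
  exact absurd this hneg.ne

lemma min_principle {n : ℕ} (hn : 1 ≤ n) {U : Set (EE n)} (hU : IsOpen U)
    (hb : Bornology.IsBounded U) {v : EE n → ℝ}
    (hv : ContDiffOn ℝ 2 v U) (hc : ContinuousOn v (closure U)) (hl : ∀ x ∈ U, lap v x ≤ 0)
    (hf : ∀ x ∈ frontier U, 0 ≤ v x) : ∀ x ∈ U, 0 ≤ v x := by
  intro x hx
  obtain ⟨M, hM0, hM⟩ := hb.closure.exists_pos_norm_le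
  have key : ∀ ε > 0, -(ε * M ^ 2) ≤ v x := by
    intro ε hε
    set g : EE n → ℝ := fun y => v y + (fun s => -ε * s) (‖y‖ ^ 2) with hg
    have h1 : ∀ s : ℝ, -1 < s → HasDerivAt (fun s => -ε * s) ((fun _ => -ε) s) s := fun s _ => by
      simpa using (hasDerivAt_id s).const_mul (-ε)
    have h2 : ∀ s : ℝ, -1 < s → HasDerivAt (fun _ : ℝ => -ε) ((fun _ => (0 : ℝ)) s) s :=
      fun s _ => hasDerivAt_const s _
    have hN : ContDiff ℝ 2 (fun y : EE n => (fun s => -ε * s) (‖y‖ ^ 2)) :=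
      radial_contDiff one_pos h1 h2 continuousOn_const
    have hgc : ContinuousOn g (closure U) := hc.add hN.continuous.continuousOn
    obtain ⟨z, hz, hzm⟩ := (hb.isCompact_closure).exists_isMinOn ⟨x, subset_closure hx⟩ hgc
    have hzU : z ∉ U := by
      intro hzU
      have hmin : IsLocalMin g z := by
        filter_upwards [hU.mem_nhds hzU] with y hy
        exact hzm (subset_closure hy)
      have := lap_nonneg_of_isLocalMin hU (hv.add hN.contDiffOn) hzU hmin
      rw [lap_add hU hv hN.contDiffOn hzU, radial_lap one_pos h1 h2] at this
      have := hl z hzU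
      have : (0 : ℝ) < n := by exact_mod_cast hn
      nlinarith [mul_pos this hε]
    have hzf : z ∈ frontier U := ⟨hz, by rwa [hU.interior_eq]⟩
    have h3 := hf z hzf
    have h4 : g z ≤ g x := hzm (subset_closure hx)
    simp only [hg] at h4
    have h5 : ‖z‖ ^ 2 ≤ M ^ 2 := pow_le_pow_left₀ (norm_nonneg _) (hM z hz) 2
    nlinarith [sq_nonneg ‖x‖, mul_le_mul_of_nonneg_left h5 hε.le, mul_nonneg hε.le (sq_nonneg ‖x‖)]
  by_contra! hneg
  have := key (-(v x) / (2 * M ^ 2)) (by have := sq_pos_of_pos hM0; apply div_pos <;> linarith)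
  have hM2 : M ^ 2 ≠ 0 := (sq_pos_of_pos hM0).ne'
  have h6 : -(v x) / (2 * M ^ 2) * M ^ 2 = -(v x) / 2 := by field_simp
  rw [h6] at this
  linarith

/-- The bump weight. -/
noncomputable def eta {n : ℕ} (y : EE n) : ℝ := 6 * (max (1 - ‖y‖ ^ 2) 0) ^ 2

lemma eta_cont {n : ℕ} : Continuous (eta : EE n → ℝ) := by
  unfold eta; fun_prop

lemma eta_nonneg {n : ℕ} (y : EE n) : 0 ≤ eta y := by unfold eta; positivity

lemma eta_zero {n : ℕ} {y : EE n} (h : 1 ≤ ‖y‖) : eta y = 0 := by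
  unfold eta
  rw [max_eq_right (by nlinarith)]; simp

lemma tsupp_of_zero {n : ℕ} {p : EE n → ℝ} (h : ∀ y, 1 ≤ ‖y‖ → p y = 0) :
    tsupport p ⊆ closedBall 0 1 := by
  apply closure_minimal _ isClosed_closedBall
  intro y hy
  by_contra hc
  simp only [mem_closedBall, dist_zero_right, not_le] at hc
  exact hy (h y hc.le)

lemma compSupp_of_zero {n : ℕ} {p : EE n → ℝ} (h : ∀ y, 1 ≤ ‖y‖ → p y = 0) :
    HasCompactSupport p :=
  HasCompactSupport.of_support_subset_isCompact (isCompact_closedBall 0 1)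
    ((subset_tsupport p).trans (tsupp_of_zero h))

lemma rad_ineq {n : ℕ} {U : Set (EE n)} (hU : IsOpen U) (hU1 : closedBall 0 1 ⊆ U)
    {u : EE n → ℝ} (hu : ContDiffOn ℝ 2 u U) (hl : ∀ x ∈ U, lap u x ≤ 0) :
    ∫ y, fderiv ℝ u y y * eta y ≤ 0 := by
  set H : ℝ → ℝ := fun s => (max (1 - s) 0) ^ 3
  set H1 : ℝ → ℝ := fun s => -(3 * (max (1 - s) 0) ^ 2)
  set H2 : ℝ → ℝ := fun s => 6 * (max (1 - s) 0)
  have hin : ∀ s : ℝ, HasDerivAt (fun s : ℝ => 1 - s) (-1) s := fun s => by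
    simpa using (hasDerivAt_id s).const_sub 1
  have h1 : ∀ s : ℝ, -1 < s → HasDerivAt H (H1 s) s := fun s _ => by
    convert! (hasDerivAt_maxpow 2 (by norm_num) (1 - s)).comp s (hin s) using 1
    simp only [H1]; push_cast; ring
  have h2 : ∀ s : ℝ, -1 < s → HasDerivAt H1 (H2 s) s := fun s _ => by
    convert! (((hasDerivAt_maxpow 1 (by norm_num) (1 - s)).comp s (hin s)).const_mul 3).neg using 1
    simp only [H2]; push_cast; ring
  have h3 : ContinuousOn H2 (Ioi (-1)) := by
    apply Continuous.continuousOn; fun_prop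
  set p : EE n → ℝ := fun y => H (‖y‖ ^ 2) with hp
  have hpC : ContDiff ℝ 2 p := radial_contDiff one_pos h1 h2 h3
  have hp0 : ∀ y, 1 ≤ ‖y‖ → p y = 0 := fun y hy => by
    simp only [hp, H]; rw [max_eq_right (by nlinarith)]; simp
  have hps := (tsupp_of_zero hp0).trans hU1
  have hpc := compSupp_of_zero hp0
  have e1 : ∀ y : EE n, fderiv ℝ u y y * eta y
      = -∑ i, fderiv ℝ u y (ee i) * fderiv ℝ p y (ee i) := by
    intro y
    have hy : y = ∑ i, y i • (ee i : EE n) := by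
      ext j
      simp [ee, Finset.sum_apply, Pi.single_apply]
    conv_lhs => rw [show fderiv ℝ u y y = fderiv ℝ u y (∑ i, y i • (ee i : EE n)) by rw [← hy]]
    rw [map_sum, Finset.sum_mul, ← Finset.sum_neg_distrib]
    refine Finset.sum_congr rfl fun i _ => ?_
    rw [hp, radial_fderiv one_pos h1]
    simp only [map_smul, smul_eq_mul, eta, H1]
    ring
  simp_rw [e1]
  have hp' : ∀ e, Continuous (fun y => fderiv ℝ p y e) := fun e =>
    (hpC.continuous_fderiv two_ne_zero).clm_apply continuous_const
  rw [integral_neg, integral_finsetSum]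
  · have : ∀ i : Fin n, ∫ y, fderiv ℝ u y (ee i) * fderiv ℝ p y (ee i) =
        -∫ y, fderiv ℝ (fun z => fderiv ℝ u z (ee i)) y (ee i) * p y := fun i =>
      ibp hU (fderiv_apply_contDiffOn hU hu _) (hpC.of_le (by norm_num)) hpc hps _
    rw [Finset.sum_congr rfl fun i _ => this i, Finset.sum_neg_distrib, neg_neg,
      ← integral_finsetSum]
    · apply integral_nonpos
      intro y
      simp only [Pi.zero_apply]
      rw [← Finset.sum_mul]
      by_cases hy : ‖y‖ ≤ 1
      · have hyU : y ∈ U := hU1 (by simpa using hy)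
        exact mul_nonpos_of_nonpos_of_nonneg (hl y hyU) (by simp only [hp, H]; positivity)
      · rw [hp0 y (not_le.1 hy).le, mul_zero]
    · intro i _
      exact integrable_mul_of_tsupport hU
        (fderiv_apply_contOn hU (fderiv_apply_contDiffOn hU hu _) _) hpC.continuous hpc hps
  · intro i _
    exact integrable_mul_of_tsupport hU (fderiv_apply_contOn hU (hu.of_le (by norm_num)) _)
      (hp' _) (hpc.fderiv_apply (𝕜 := ℝ) _) ((tsupport_fderiv_apply_subset ℝ _).trans hps)

lemma mean_ineq0 {n : ℕ} {R : ℝ} (hR : 1 < R) {u : EE n → ℝ}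
    (hu : ContDiffOn ℝ 2 u (ball (0 : EE n) R)) (hl : ∀ x ∈ ball (0 : EE n) R, lap u x ≤ 0) :
    ∫ y, u y * eta y ≤ u 0 * ∫ y : EE n, eta y := by
  obtain ⟨b, hb1, hbR⟩ := exists_between hR
  have hbs : closedBall (0 : EE n) b ⊆ ball (0 : EE n) R := closedBall_subset_ball hbR
  have hu1 : ContDiffOn ℝ 1 u (ball (0 : EE n) R) := hu.of_le (by norm_num)
  have hfc : ContinuousOn (fderiv ℝ u) (ball (0 : EE n) R) :=
    hu1.continuousOn_fderiv_of_isOpen isOpen_ball le_rfl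
  obtain ⟨M, hM⟩ := (isCompact_closedBall (0 : EE n) b).exists_bound_of_continuousOn (hfc.mono hbs)
  have hmem : ∀ t ∈ Ioo (-b) b, ∀ y : EE n, ‖y‖ ≤ 1 → t • y ∈ closedBall (0 : EE n) b := by
    intro t ht y hy
    simp only [mem_closedBall, dist_zero_right, norm_smul, Real.norm_eq_abs]
    have : |t| < b := abs_lt.2 ht
    nlinarith [abs_nonneg t, norm_nonneg y]
  have hts : tsupport (eta : EE n → ℝ) ⊆ closedBall 0 1 := tsupp_of_zero fun y hy => eta_zero hy
  have hcs : HasCompactSupport (eta : EE n → ℝ) := compSupp_of_zero fun y hy => eta_zero hy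
  have hopen : ∀ t : ℝ, IsOpen ((fun y : EE n => t • y) ⁻¹' ball (0 : EE n) R) := fun t =>
    isOpen_ball.preimage (continuous_const_smul t)
  have hsub : ∀ t ∈ Ioo (-b) b, tsupport (eta : EE n → ℝ) ⊆ (fun y : EE n => t • y) ⁻¹' ball (0 : EE n) R :=
    fun t ht y hy => hbs (hmem t ht y (by simpa using hts hy))
  have hcF : ∀ t ∈ Ioo (-b) b, Integrable (fun y : EE n => u (t • y) * eta y) := fun t ht =>
    integrable_mul_of_tsupport (hopen t)
      (hu.continuousOn.comp (continuous_const_smul t).continuousOn (fun y hy => hy))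
      eta_cont hcs (hsub t ht)
  have hcF' : ∀ t ∈ Ioo (-b) b, Integrable (fun y : EE n => fderiv ℝ u (t • y) y * eta y) :=
    fun t ht => by
    have g1 : ContinuousOn (fun y : EE n => fderiv ℝ u (t • y))
        ((fun y : EE n => t • y) ⁻¹' ball (0 : EE n) R) :=
      hfc.comp (continuous_const_smul t).continuousOn (fun y hy => hy)
    have g2 : ContinuousOn (fun y : EE n => fderiv ℝ u (t • y) y)
        ((fun y : EE n => t • y) ⁻¹' ball (0 : EE n) R) :=
      ContinuousOn.clm_apply g1 (continuousOn_id' _)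
    exact integrable_mul_of_tsupport (hopen t) g2 eta_cont hcs (hsub t ht)
  have hder : ∀ t ∈ Ioo (-b) b, HasDerivAt (fun t : ℝ => ∫ y : EE n, u (t • y) * eta y)
      (∫ y : EE n, fderiv ℝ u (t • y) y * eta y) t := by
    intro t ht
    refine (hasDerivAt_integral_of_dominated_loc_of_deriv_le (s := Ioo (-b) b)
      (bound := fun y => M * eta y) (isOpen_Ioo.mem_nhds ht) ?_ (hcF t ht)
      (F' := fun t y => fderiv ℝ u (t • y) y * eta y)
      (hcF' t ht).aestronglyMeasurable ?_ ?_ ?_).2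
    · filter_upwards [isOpen_Ioo.mem_nhds ht] with s hs
      exact (hcF s hs).aestronglyMeasurable
    · refine Filter.Eventually.of_forall fun y s hs => ?_
      by_cases hy : ‖y‖ ≤ 1
      · rw [norm_mul, Real.norm_of_nonneg (eta_nonneg y)]
        apply mul_le_mul_of_nonneg_right _ (eta_nonneg y)
        have h1 := hM _ (hmem s hs y hy)
        calc _ ≤ ‖fderiv ℝ u (s • y)‖ * ‖y‖ := ContinuousLinearMap.le_opNorm _ _
          _ ≤ ‖fderiv ℝ u (s • y)‖ * 1 := by gcongr
          _ ≤ M := by simpa using h1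
      · simp [eta_zero (not_le.1 hy).le]
    · exact (eta_cont.integrable_of_hasCompactSupport hcs).const_mul M
    · refine Filter.Eventually.of_forall fun y s hs => ?_
      by_cases hy : ‖y‖ ≤ 1
      · have h1 := (hu.differentiableOn two_ne_zero).differentiableAt
          (isOpen_ball.mem_nhds (hbs (hmem s hs y hy)))
        have h2 : HasDerivAt (fun s : ℝ => s • y) y s := by
          simpa using (hasDerivAt_id s).smul_const y
        exact (h1.hasFDerivAt.comp_hasDerivAt s h2).mul_const _
      · simpa [eta_zero (not_le.1 hy).le] using hasDerivAt_const s (0 : ℝ)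
  have hIcc : Icc (0 : ℝ) 1 ⊆ Ioo (-b) b := fun t ht => ⟨by linarith [ht.1], by linarith [ht.2]⟩
  have hanti : AntitoneOn (fun t : ℝ => ∫ y : EE n, u (t • y) * eta y) (Icc 0 1) := by
    apply antitoneOn_of_deriv_nonpos (convex_Icc 0 1)
    · exact fun t ht => (hder t (hIcc ht)).continuousAt.continuousWithinAt
    · exact fun t ht => (hder t (hIcc (interior_subset ht))).differentiableAt.differentiableWithinAt
    · intro t ht
      rw [(hder t (hIcc (interior_subset ht))).deriv]
      rw [interior_Icc] at ht
      have h4 := rad_ineq (hopen t) (u := fun y => u (t • y))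
        (fun y hy => hbs (hmem t (hIcc ⟨ht.1.le, ht.2.le⟩) y (by simpa using hy)))
        (hu.comp (contDiff_const_smul t).contDiffOn fun y hy => hy) (fun x hx => by
          rw [lap_comp_smul]
          exact mul_nonpos_of_nonneg_of_nonpos (sq_nonneg t) (hl _ hx))
      simp_rw [fderiv_comp_smul] at h4
      simp only [smul_apply, smul_eq_mul, mul_assoc] at h4
      rw [integral_const_mul] at h4
      exact nonpos_of_mul_nonpos_right h4 ht.1
  have := hanti (show (0 : ℝ) ∈ Icc (0 : ℝ) 1 by simp) (show (1 : ℝ) ∈ Icc (0 : ℝ) 1 by simp)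
    zero_le_one
  simpa [integral_const_mul] using this

lemma mean_ball (n : ℕ) {D : ℝ} (hD : 0 < D) : ∃ c : ℝ, 0 < c ∧
    ∀ (w : EE n) (v : EE n → ℝ) (D' : ℝ), D < D' → ContDiffOn ℝ 2 v (ball w D') →
      (∀ x ∈ ball w D', lap v x ≤ 0) → (∀ x ∈ ball w D', 0 ≤ v x) →
      c * ∫ y in ball w (D / 2), v y ≤ v w := by
  have hcs : HasCompactSupport (eta : EE n → ℝ) := compSupp_of_zero fun y hy => eta_zero hy
  have hN : 0 < ∫ y : EE n, eta y := by
    apply eta_cont.integral_pos_of_hasCompactSupport_nonneg_nonzero hcs eta_nonneg (x := 0)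
    simp [eta]
  set N := ∫ y : EE n, eta y
  refine ⟨|(D ^ Module.finrank ℝ (EE n))⁻¹| / N, by positivity, ?_⟩
  intro w v D' hDD hv hl h0
  set g : EE n → ℝ := fun z => v z * eta (D⁻¹ • (z - w)) with hg
  have hz : ∀ z : EE n, z ∉ ball w D → eta (D⁻¹ • (z - w)) = 0 := by
    intro z hz
    apply eta_zero
    rw [norm_smul, norm_inv, Real.norm_of_nonneg hD.le, ← dist_eq_norm]
    rw [mem_ball, not_lt] at hz
    rw [← div_eq_inv_mul, le_div_iff₀ hD]
    linarith
  have hts : tsupport (fun z : EE n => eta (D⁻¹ • (z - w))) ⊆ closedBall w D := by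
    apply closure_minimal _ isClosed_closedBall
    intro y hy
    by_contra hc
    exact hy (hz y fun h => hc (ball_subset_closedBall h))
  have hgi : Integrable g := by
    apply integrable_mul_of_tsupport isOpen_ball hv.continuousOn
    · exact eta_cont.comp (by fun_prop)
    · exact HasCompactSupport.of_support_subset_isCompact (isCompact_closedBall w D)
        ((subset_tsupport _).trans hts)
    · exact hts.trans (closedBall_subset_ball hDD)
  have hg0 : ∀ z, 0 ≤ g z := by
    intro z
    by_cases h : z ∈ ball w D
    · exact mul_nonneg (h0 z (ball_subset_ball hDD.le h)) (eta_nonneg _)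
    · simp only [hg]; rw [hz z h, mul_zero]
  have hvi : IntegrableOn v (ball w (D / 2)) := by
    have : IntegrableOn v (closedBall w D) :=
      (hv.continuousOn.mono (closedBall_subset_ball hDD)).integrableOn_compact
        (isCompact_closedBall w D)
    exact this.mono_set ((ball_subset_ball (by linarith)).trans ball_subset_closedBall)
  have h1 : ∫ y in ball w (D / 2), v y ≤ ∫ y, g y := by
    calc ∫ y in ball w (D / 2), v y ≤ ∫ y in ball w (D / 2), g y := by
          apply setIntegral_mono_on hvi hgi.integrableOn measurableSet_ball
          intro z hz
          have hv0 := h0 z (ball_subset_ball (by linarith) hz)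
          have : 1 ≤ eta (D⁻¹ • (z - w)) := by
            have h2 : ‖D⁻¹ • (z - w)‖ ≤ 1 / 2 := by
              rw [norm_smul, norm_inv, Real.norm_of_nonneg hD.le, ← dist_eq_norm,
                ← div_eq_inv_mul, div_le_iff₀ hD]
              have := mem_ball.1 hz
              linarith
            have h3 : (3 / 4 : ℝ) ≤ max (1 - ‖D⁻¹ • (z - w)‖ ^ 2) 0 := by
              apply le_max_of_le_left
              nlinarith [norm_nonneg (D⁻¹ • (z - w))]
            unfold eta
            nlinarith
          simp only [hg]
          nlinarith
      _ ≤ ∫ y, g y := setIntegral_le_integral hgi (Filter.Eventually.of_forall hg0)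
  have hm := mean_ineq0 (n := n) (R := D' / D) ((one_lt_div hD).2 hDD)
    (u := fun y => v (w + D • y))
    (hv.comp (by fun_prop) (fun y hy => by
      simp only [mem_ball, dist_zero_right, dist_self_add_left, norm_smul,
        Real.norm_of_nonneg hD.le] at hy ⊢
      rw [lt_div_iff₀ hD] at hy; linarith))
    (fun y hy => by
      have := lap_comp_smul (fun z => v (w + z)) D y
      rw [this, lap_comp_add]
      apply mul_nonpos_of_nonneg_of_nonpos (sq_nonneg D)
      apply hl
      simp only [mem_ball, dist_zero_right, dist_self_add_left, norm_smul,
        Real.norm_of_nonneg hD.le] at hy ⊢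
      rw [lt_div_iff₀ hD] at hy; linarith)
  have h4 : ∫ y : EE n, v (w + D • y) * eta y = |(D ^ Module.finrank ℝ (EE n))⁻¹| * ∫ y, g y := by
    have e1 : ∀ y : EE n, v (w + D • y) * eta y = (fun z => g (w + z)) (D • y) := by
      intro y
      simp only [hg, add_sub_cancel_left, smul_smul, inv_mul_cancel₀ hD.ne', one_smul]
    simp_rw [e1]
    rw [Measure.integral_comp_smul volume (fun z => g (w + z)) D, integral_add_left_eq_self g w,
      smul_eq_mul]
  rw [h4] at hm
  simp only [smul_zero, add_zero] at hm
  rw [div_mul_eq_mul_div, div_le_iff₀ hN]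
  exact (mul_le_mul_of_nonneg_left h1 (abs_nonneg _)).trans hm

/-- The fixed annulus. -/
def AA (n : ℕ) (ρ : ℝ) : Set (EE n) := {y | ρ / 2 < ‖y‖ ∧ ‖y‖ < 1}

/-- Nonnegative superharmonic functions on the fixed annulus. -/
def Sup {n : ℕ} (ρ : ℝ) (v : EE n → ℝ) : Prop :=
  ContDiffOn ℝ 2 v (AA n ρ) ∧ (∀ x ∈ AA n ρ, lap v x ≤ 0) ∧ ∀ x ∈ AA n ρ, 0 ≤ v x

/-- The closed ring. -/
def KK (n : ℕ) (a b : ℝ) : Set (EE n) := {y | a ≤ ‖y‖ ∧ ‖y‖ ≤ b}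

lemma KK_compact (n : ℕ) (a b : ℝ) : IsCompact (KK n a b) := by
  apply (isCompact_closedBall (0 : EE n) b).of_isClosed_subset
  · exact (isClosed_le continuous_const continuous_norm).inter
      (isClosed_le continuous_norm continuous_const)
  · intro y hy; simpa using hy.2

lemma KK_preconn (n : ℕ) (hn : 2 ≤ n) {a b : ℝ} (ha : 0 < a) : IsPreconnected (KK n a b) := by
  have hs : IsPreconnected (sphere (0 : EE n) 1) := by
    apply isPreconnected_sphere
    rw [← Module.finrank_eq_rank, finrank_euclideanSpace_fin]
    exact_mod_cast hn
  have h2 := (isPreconnected_Icc (a := a) (b := b)).prod hs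
  have h3 := h2.image (fun p : ℝ × EE n => p.1 • p.2) (by fun_prop)
  convert! h3 using 1
  ext y
  simp only [KK, mem_ofPred_eq, mem_image, mem_prod, mem_Icc, mem_sphere_iff_norm, sub_zero,
    Prod.exists]
  constructor
  · intro hy
    have hy0 : 0 < ‖y‖ := by linarith [hy.1]
    refine ⟨‖y‖, ‖y‖⁻¹ • y, ⟨hy, ?_⟩, ?_⟩
    · rw [norm_smul, norm_inv, norm_norm, inv_mul_cancel₀ hy0.ne']
    · rw [smul_smul, mul_inv_cancel₀ hy0.ne', one_smul]
  · rintro ⟨t, z, ⟨ht, hz⟩, rfl⟩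
    rw [norm_smul, hz, mul_one, Real.norm_of_nonneg (by linarith [ht.1])]
    exact ht

lemma harnack (n : ℕ) (hn : 2 ≤ n) {a b : ℝ} (ha : 0 < a) (hab : a < b) (hb : b < 1) :
    ∃ c : ℝ, 0 < c ∧ ∀ v : EE n → ℝ, Sup a v → ∀ x ∈ KK n a b,
      c * ∫ y in KK n a b, v y ≤ v x := by
  obtain ⟨d, hd, hd1, hd2⟩ : ∃ d : ℝ, 0 < d ∧ 6 * d ≤ a / 2 ∧ 6 * d ≤ 1 - b := by
    refine ⟨min (a / 2) (1 - b) / 6, by have : 0 < 1 - b := by linarith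
                                        positivity, ?_, ?_⟩
    · linarith [min_le_left (a / 2) (1 - b)]
    · linarith [min_le_right (a / 2) (1 - b)]
  obtain ⟨c0, hc0, hmean⟩ := mean_ball n (D := 4 * d) (by linarith)
  have hsub : ∀ w z : EE n, z ∈ KK n a b → dist w z ≤ d → ball w (5 * d) ⊆ AA n a := by
    intro w z hz hwz y hy
    have h1 : dist y z < 6 * d := by
      have := dist_triangle y w z
      have := mem_ball.1 hy
      linarith
    rw [dist_eq_norm] at h1
    have h2 := norm_sub_norm_le y z
    have h3 := norm_sub_norm_le z y
    rw [norm_sub_rev] at h3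
    constructor
    · linarith [hz.1]
    · linarith [hz.2]
  have hintg : ∀ v : EE n → ℝ, Sup a v → ∀ w z : EE n, z ∈ KK n a b → dist w z ≤ d →
      IntegrableOn v (ball w (2 * d)) := by
    intro v hv w z hz hwz
    have : IntegrableOn v (closedBall w (2 * d)) :=
      (hv.1.continuousOn.mono ((closedBall_subset_ball (by linarith)).trans
        (hsub w z hz hwz))).integrableOn_compact (isCompact_closedBall _ _)
    exact this.mono_set ball_subset_closedBall
  have L1 : ∀ v : EE n → ℝ, Sup a v → ∀ w z : EE n, z ∈ KK n a b → dist w z ≤ d →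
      c0 * ∫ y in ball z d, v y ≤ v w := by
    intro v hv w z hz hwz
    have hs := hsub w z hz hwz
    have h1 := hmean w v (5 * d) (by linarith) (hv.1.mono hs) (fun x hx => hv.2.1 x (hs hx))
      (fun x hx => hv.2.2 x (hs hx))
    rw [show 4 * d / 2 = 2 * d by ring] at h1
    refine le_trans (mul_le_mul_of_nonneg_left ?_ hc0.le) h1
    apply setIntegral_mono_set (hintg v hv w z hz hwz)
    · filter_upwards [ae_restrict_mem measurableSet_ball] with x hx
      exact hv.2.2 x (hs (ball_subset_ball (by linarith) hx))
    · apply Filter.Eventually.of_forall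
      apply ball_subset_ball'
      rw [dist_comm]; linarith
  have hI0 : ∀ v : EE n → ℝ, Sup a v → ∀ z ∈ KK n a b, 0 ≤ ∫ y in ball z d, v y := by
    intro v hv z hz
    apply setIntegral_nonneg measurableSet_ball
    intro x hx
    exact hv.2.2 x (hsub z z hz (by simpa using hd.le) (ball_subset_ball (by linarith) hx))
  set c1 := volume.real (ball (0 : EE n) (d / 2)) with hc1
  have hc1p : 0 < c1 := by
    rw [hc1, Measure.real]
    exact ENNReal.toReal_pos (measure_ball_pos _ _ (by linarith)).ne' measure_ball_lt_top.ne
  have L2 : ∀ v : EE n → ℝ, Sup a v → ∀ z ∈ KK n a b, ∀ z' ∈ KK n a b, dist z z' < d / 2 →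
      c1 * c0 * ∫ y in ball z' d, v y ≤ ∫ y in ball z d, v y := by
    intro v hv z hz z' hz' hzz
    have hi := hintg v hv z z hz (by simpa using hd.le)
    calc c1 * c0 * ∫ y in ball z' d, v y
        = ∫ w in ball z (d / 2), (c0 * ∫ y in ball z' d, v y) := by
          rw [setIntegral_const, Measure.addHaar_real_ball_center, smul_eq_mul]
          ring
      _ ≤ ∫ w in ball z (d / 2), v w := by
          apply setIntegral_mono_on _ (hi.mono_set (ball_subset_ball (by linarith)))
            measurableSet_ball
          · intro w hw
            apply L1 v hv w z' hz'
            have := dist_triangle w z z'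
            have := mem_ball.1 hw
            linarith
          · exact integrableOn_const measure_ball_lt_top.ne
      _ ≤ ∫ w in ball z d, v w := by
          apply setIntegral_mono_set (hi.mono_set (ball_subset_ball (by linarith)))
          · filter_upwards [ae_restrict_mem measurableSet_ball] with x hx
            exact hv.2.2 x (hsub z z hz (by simpa using hd.le)
              (ball_subset_ball (by linarith) hx))
          · apply Filter.Eventually.of_forall
            exact ball_subset_ball (by linarith)
  have hP : ∀ z ∈ KK n a b, ∀ z' ∈ KK n a b, ∃ c : ℝ, 0 < c ∧ ∀ v : EE n → ℝ, Sup a v →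
      c * ∫ y in ball z' d, v y ≤ ∫ y in ball z d, v y := by
    intro z hz z' hz'
    refine (KK_preconn n hn (b := b) ha).induction₂' (fun z z' => ∃ c : ℝ, 0 < c ∧
      ∀ v : EE n → ℝ, Sup a v → c * ∫ y in ball z' d, v y ≤ ∫ y in ball z d, v y) ?_ ?_ hz hz'
    · intro x hx
      filter_upwards [self_mem_nhdsWithin,
        mem_nhdsWithin_of_mem_nhds (ball_mem_nhds x (half_pos hd))] with y hy hyb
      refine ⟨⟨c1 * c0, by positivity, fun v hv => L2 v hv x hx y hy ?_⟩,
        ⟨c1 * c0, by positivity, fun v hv => L2 v hv y hy x hx (mem_ball.1 hyb)⟩⟩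
      rw [dist_comm]; exact hyb
    · rintro x y z - - - ⟨c, hc, h⟩ ⟨c', hc', h'⟩
      refine ⟨c * c', by positivity, fun v hv => ?_⟩
      have h3 := h v hv
      have h4 := mul_le_mul_of_nonneg_left (h' v hv) hc.le
      rw [mul_assoc]
      linarith
  obtain ⟨z0, hz0⟩ : (KK n a b).Nonempty := by
    refine ⟨a • ee ⟨0, by omega⟩, ?_⟩
    have : ‖a • (ee ⟨0, by omega⟩ : EE n)‖ = a := by
      rw [norm_smul, Real.norm_of_nonneg ha.le]; simp [ee]
    simp only [KK, mem_ofPred_eq, this]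
    exact ⟨le_rfl, hab.le⟩
  have hQ : ∃ c : ℝ, 0 < c ∧ ∀ v : EE n → ℝ, Sup a v → ∀ x ∈ KK n a b,
      c * ∫ y in ball z0 d, v y ≤ v x := by
    refine (KK_compact n a b).induction_on (p := fun S => ∃ c : ℝ, 0 < c ∧
      ∀ v : EE n → ℝ, Sup a v → ∀ x ∈ S, c * ∫ y in ball z0 d, v y ≤ v x) ?_ ?_ ?_ ?_
    · exact ⟨1, one_pos, by simp⟩
    · rintro s t hst ⟨c, hc, h⟩
      exact ⟨c, hc, fun v hv x hx => h v hv x (hst hx)⟩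
    · rintro s t ⟨c, hc, h⟩ ⟨c', hc', h'⟩
      refine ⟨min c c', lt_min hc hc', fun v hv x hx => ?_⟩
      have h0 := hI0 v hv z0 hz0
      rcases hx with hx | hx
      · exact (mul_le_mul_of_nonneg_right (min_le_left _ _) h0).trans (h v hv x hx)
      · exact (mul_le_mul_of_nonneg_right (min_le_right _ _) h0).trans (h' v hv x hx)
    · intro x hx
      refine ⟨ball x d, mem_nhdsWithin_of_mem_nhds (ball_mem_nhds x hd), ?_⟩
      obtain ⟨c, hc, h⟩ := hP x hx z0 hz0
      refine ⟨c0 * c, by positivity, fun v hv y hy => ?_⟩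
      have h1 := L1 v hv y x hx (mem_ball.1 hy).le
      have h2 := mul_le_mul_of_nonneg_left (h v hv) hc0.le
      rw [mul_assoc]; linarith
  have hR : ∃ C : ℝ, 0 ≤ C ∧ ∀ v : EE n → ℝ, Sup a v →
      ∫⁻ y in KK n a b, ENNReal.ofReal (v y) ≤ ENNReal.ofReal (C * ∫ y in ball z0 d, v y) := by
    refine (KK_compact n a b).induction_on (p := fun S => ∃ C : ℝ, 0 ≤ C ∧
      ∀ v : EE n → ℝ, Sup a v →
      ∫⁻ y in S, ENNReal.ofReal (v y) ≤ ENNReal.ofReal (C * ∫ y in ball z0 d, v y)) ?_ ?_ ?_ ?_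
    · exact ⟨0, le_rfl, by simp⟩
    · rintro s t hst ⟨c, hc, h⟩
      exact ⟨c, hc, fun v hv => (lintegral_mono_set hst).trans (h v hv)⟩
    · rintro s t ⟨c, hc, h⟩ ⟨c', hc', h'⟩
      refine ⟨c + c', by positivity, fun v hv => ?_⟩
      have h0 := hI0 v hv z0 hz0
      rw [add_mul, ENNReal.ofReal_add (by positivity) (by positivity)]
      exact (lintegral_union_le _ _ _).trans (add_le_add (h v hv) (h' v hv))
    · intro x hx
      refine ⟨ball x d, mem_nhdsWithin_of_mem_nhds (ball_mem_nhds x hd), ?_⟩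
      obtain ⟨c, hc, h⟩ := hP z0 hz0 x hx
      refine ⟨c⁻¹, by positivity, fun v hv => ?_⟩
      rw [← ofReal_integral_eq_lintegral_ofReal]
      · apply ENNReal.ofReal_le_ofReal
        rw [← div_eq_inv_mul, le_div_iff₀ hc, mul_comm]
        exact h v hv
      · exact (hintg v hv x x hx (by simpa using hd.le)).mono_set (ball_subset_ball (by linarith))
      · filter_upwards [ae_restrict_mem measurableSet_ball] with y hy
        exact hv.2.2 y (hsub x x hx (by simpa using hd.le)
              (ball_subset_ball (by linarith) hy))
  obtain ⟨c, hc, hQ⟩ := hQ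
  obtain ⟨C, hC, hR⟩ := hR
  refine ⟨c / (C + 1), by positivity, fun v hv x hx => ?_⟩
  have hKA : KK n a b ⊆ AA n a := fun y hy => ⟨by linarith [hy.1], by linarith [hy.2]⟩
  have h0 := hI0 v hv z0 hz0
  have h1 : ∫ y in KK n a b, v y ≤ C * ∫ y in ball z0 d, v y := by
    have h2 := hR v hv
    rw [← ofReal_integral_eq_lintegral_ofReal] at h2
    · exact (ENNReal.ofReal_le_ofReal_iff (by positivity)).1 h2
    · exact (hv.1.continuousOn.mono hKA).integrableOn_compact (KK_compact n a b)
    · filter_upwards [ae_restrict_mem (KK_compact n a b).measurableSet] with y hy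
      exact hv.2.2 y (hKA hy)
  have h2 := hQ v hv x hx
  refine le_trans ?_ h2
  rw [div_mul_eq_mul_div, div_le_iff₀ (by positivity), mul_assoc]
  apply mul_le_mul_of_nonneg_left _ hc.le
  nlinarith

lemma cutoff {a b : ℝ} (hab : a < b) : ∃ χ : ℝ → ℝ, ContDiff ℝ 2 χ ∧ (∀ s, 0 ≤ χ s) ∧
    (∀ s, χ s ≤ 1) ∧ (∀ s, s ≤ a → χ s = 1) ∧ (∀ s, b ≤ s → χ s = 0) := by
  have hba : 0 < b - a := by linarith
  refine ⟨fun s => Real.smoothTransition ((b - s) / (b - a)), ?_, fun s => ?_, fun s => ?_,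
    fun s hs => ?_, fun s hs => ?_⟩
  · exact Real.smoothTransition.contDiff.comp (by fun_prop)
  · exact Real.smoothTransition.nonneg _
  · exact Real.smoothTransition.le_one _
  · exact Real.smoothTransition.one_of_one_le ((one_le_div hba).2 (by linarith))
  · exact Real.smoothTransition.zero_of_nonpos (div_nonpos_of_nonpos_of_nonneg (by linarith) hba.le)

lemma radial_test (n : ℕ) (hn : 3 ≤ n) {a b : ℝ} (ha : 0 < a) (hab : a < b) (hb : b < 1) :
    ∃ C : ℝ, 0 < C ∧ ∀ r : ℝ, 0 < r → 2 * r < a → ∃ p : EE n → ℝ, ContDiff ℝ 2 p ∧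
      tsupport p ⊆ KK n (3 / 2 * r) b ∧ (∀ y, 0 ≤ p y) ∧
      (∀ y ∈ KK n (2 * r) a, 1 / 1000 ≤ p y) ∧ (∀ y, ‖y‖ < a → 0 ≤ lap p y) ∧
      (∀ y ∈ KK n a b, -C ≤ lap p y) := by
  have hab2 : a ^ 2 < b ^ 2 := by nlinarith
  obtain ⟨χ, hχ, hχ0, hχ1, hχa, hχb⟩ := cutoff hab2
  have hχd : ContDiff ℝ 1 (deriv χ) := by
    have := (contDiff_succ_iff_deriv (n := 1) (f := χ)).1 (by simpa [one_add_one_eq_two] using hχ)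
    exact this.2.2
  have hχdd : Continuous (deriv (deriv χ)) := hχd.continuous_deriv le_rfl
  obtain ⟨M1, hM1⟩ := (isCompact_Icc (a := (0 : ℝ)) (b := 1)).exists_bound_of_continuousOn
    hχd.continuous.continuousOn
  obtain ⟨M2, hM2⟩ := (isCompact_Icc (a := (0 : ℝ)) (b := 1)).exists_bound_of_continuousOn
    hχdd.continuousOn
  have hM1n : 0 ≤ M1 := (norm_nonneg _).trans (hM1 0 (by simp))
  have hM2n : 0 ≤ M2 := (norm_nonneg _).trans (hM2 0 (by simp))
  refine ⟨24 * (a ^ 3)⁻¹ * M1 + (4 * M2 + 2 * n * M1) + 1, by positivity, ?_⟩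
  intro r hr hra
  have hr2 : 0 < r ^ 2 := by positivity
  set q : ℝ → ℝ := fun s => √(s + r ^ 2) with hq
  set T : ℝ → ℝ := fun s => 1 - 2 * r * (q s)⁻¹ with hT
  set T1 : ℝ → ℝ := fun s => r * ((q s)⁻¹) ^ 3 with hT1
  set T2 : ℝ → ℝ := fun s => -(3 / 2 * r * ((q s)⁻¹) ^ 5) with hT2
  have hqpos : ∀ s, -r ^ 2 < s → 0 < q s := fun s hs => Real.sqrt_pos.2 (by linarith)
  have hqi : ∀ s, -r ^ 2 < s → HasDerivAt (fun s => (q s)⁻¹) (-(1 / 2 * ((q s)⁻¹) ^ 3)) s := by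
    intro s hs
    have h1 : HasDerivAt q (1 / (2 * √(s + r ^ 2))) s :=
      HasDerivAt.sqrt ((hasDerivAt_id s).add_const _) (show (0:ℝ) < s + r ^ 2 by linarith).ne'
    have h2 := h1.inv (hqpos s hs).ne'
    convert! h2 using 1
    have := (hqpos s hs).ne'
    change _ = -(1 / (2 * q s)) / q s ^ 2
    field_simp
  have hTd : ∀ s, -r ^ 2 < s → HasDerivAt T (T1 s) s := by
    intro s hs
    convert! ((hqi s hs).const_mul (2 * r)).const_sub 1 using 1
    simp only [hT1]; ring
  have hTdd : ∀ s, -r ^ 2 < s → HasDerivAt T1 (T2 s) s := by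
    intro s hs
    convert! ((hqi s hs).pow 3).const_mul r using 1
    simp only [hT2]; push_cast; ring
  set m : ℝ → ℝ := fun s => max (T s) 0 with hm
  set P : ℝ → ℝ := fun s => (m s) ^ 3 with hP
  set P1 : ℝ → ℝ := fun s => 3 * (m s) ^ 2 * T1 s with hP1
  set P2 : ℝ → ℝ := fun s => 6 * m s * T1 s ^ 2 + 3 * (m s) ^ 2 * T2 s with hP2
  have hPd : ∀ s, -r ^ 2 < s → HasDerivAt P (P1 s) s := by
    intro s hs
    convert! (hasDerivAt_maxpow 2 (by norm_num) (T s)).comp s (hTd s hs) using 1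
    simp only [hP1, hm]; push_cast; ring
  have hPdd : ∀ s, -r ^ 2 < s → HasDerivAt P1 (P2 s) s := by
    intro s hs
    have h1 : HasDerivAt (fun s => 3 * (m s) ^ 2) (3 * (2 * m s * T1 s)) s := by
      convert! (((hasDerivAt_maxpow 1 (by norm_num) (T s)).comp s (hTd s hs)).const_mul 3) using 1
      simp only [hm]; push_cast; ring
    convert! h1.mul (hTdd s hs) using 1
    simp only [hP2]; ring
  have hχ' : ∀ s, HasDerivAt χ (deriv χ s) s := fun s =>
    (hχ.differentiable two_ne_zero s).hasDerivAt
  have hχ'' : ∀ s, HasDerivAt (deriv χ) (deriv (deriv χ) s) s := fun s =>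
    (hχd.differentiable one_ne_zero s).hasDerivAt
  set G : ℝ → ℝ := fun s => P s * χ s with hG
  set G1 : ℝ → ℝ := fun s => P1 s * χ s + P s * deriv χ s with hG1
  set G2 : ℝ → ℝ := fun s => (P2 s * χ s + P1 s * deriv χ s) +
    (P1 s * deriv χ s + P s * deriv (deriv χ) s) with hG2
  have h1 : ∀ s, -r ^ 2 < s → HasDerivAt G (G1 s) s := fun s hs => (hPd s hs).mul (hχ' s)
  have h2 : ∀ s, -r ^ 2 < s → HasDerivAt G1 (G2 s) s := fun s hs =>
    ((hPdd s hs).mul (hχ' s)).add ((hPd s hs).mul (hχ'' s))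
  have h3 : ContinuousOn G2 (Ioi (-r ^ 2)) := by
    have cq : ContinuousOn (fun s => (q s)⁻¹) (Ioi (-r ^ 2)) := fun s hs =>
      (hqi s hs).continuousAt.continuousWithinAt
    have cT : ContinuousOn T (Ioi (-r ^ 2)) := fun s hs =>
      (hTd s hs).continuousAt.continuousWithinAt
    have cT1 : ContinuousOn T1 (Ioi (-r ^ 2)) := continuousOn_const.mul (cq.pow 3)
    have cT2 : ContinuousOn T2 (Ioi (-r ^ 2)) := (continuousOn_const.mul (cq.pow 5)).neg
    have cm : ContinuousOn m (Ioi (-r ^ 2)) := cT.sup continuousOn_const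
    have cP : ContinuousOn P (Ioi (-r ^ 2)) := cm.pow 3
    have cP1 : ContinuousOn P1 (Ioi (-r ^ 2)) := (continuousOn_const.mul (cm.pow 2)).mul cT1
    have cP2 : ContinuousOn P2 (Ioi (-r ^ 2)) := ((continuousOn_const.mul cm).mul (cT1.pow 2)).add
      ((continuousOn_const.mul (cm.pow 2)).mul cT2)
    have c1 := hχ.continuous.continuousOn (s := Ioi (-r ^ 2))
    have c2 := hχd.continuous.continuousOn (s := Ioi (-r ^ 2))
    have c3 := hχdd.continuousOn (s := Ioi (-r ^ 2))
    exact ((cP2.mul c1).add (cP1.mul c2)).add ((cP1.mul c2).add (cP.mul c3))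
  have hlap := fun y : EE n => radial_lap (n := n) hr2 h1 h2 y
  have hm0 : ∀ s, 0 ≤ m s := fun s => le_max_right _ _
  have hqinv : ∀ s, 0 ≤ (q s)⁻¹ := fun s => inv_nonneg.2 (Real.sqrt_nonneg _)
  have hm1 : ∀ s, m s ≤ 1 := fun s => max_le (by
    simp only [hT]; have := mul_nonneg hr.le (hqinv s); linarith) zero_le_one
  have hT1n : ∀ s, 0 ≤ T1 s := fun s => mul_nonneg hr.le (pow_nonneg (hqinv s) 3)
  have hP1n : ∀ s, 0 ≤ P1 s := fun s => mul_nonneg (by positivity) (hT1n s)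
  have hsubh : ∀ s, 0 ≤ s → 0 ≤ 4 * s * P2 s + 2 * n * P1 s := by
    intro s hs
    have hqp := hqpos s (by linarith)
    have hq2 : q s ^ 2 = s + r ^ 2 := Real.sq_sqrt (by positivity)
    have e : T1 s = r * (q s)⁻¹ ^ 5 * (s + r ^ 2) := by
      simp only [hT1]; rw [← hq2]; field_simp
    have hn' : (3 : ℝ) ≤ n := by exact_mod_cast hn
    have key : 0 ≤ 4 * s * T2 s + 2 * n * T1 s := by
      rw [e]
      simp only [hT2]
      have : 4 * s * -(3 / 2 * r * (q s)⁻¹ ^ 5) + 2 * n * (r * (q s)⁻¹ ^ 5 * (s + r ^ 2))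
        = r * (q s)⁻¹ ^ 5 * (2 * (n - 3) * s + 2 * n * r ^ 2) := by ring
      rw [this]
      have := hqinv s
      have : (0 : ℝ) ≤ n - 3 := by linarith
      positivity
    have : 4 * s * P2 s + 2 * n * P1 s = 24 * s * m s * T1 s ^ 2 +
        3 * (m s) ^ 2 * (4 * s * T2 s + 2 * n * T1 s) := by
      simp only [hP2, hP1]; ring
    rw [this]
    have := hm0 s
    positivity
  refine ⟨fun y => G (‖y‖ ^ 2), radial_contDiff hr2 h1 h2 h3, ?_, ?_, ?_, ?_, ?_⟩
  · apply closure_minimal _ (KK_compact n _ _).isClosed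
    intro y hy
    constructor
    · by_contra! hc
      apply hy
      have hT0 : T (‖y‖ ^ 2) ≤ 0 := by
        have hqp := hqpos (‖y‖ ^ 2) (by nlinarith [sq_nonneg ‖y‖])
        have : q (‖y‖ ^ 2) ≤ 2 * r := by
          apply Real.sqrt_le_iff.2
          constructor
          · linarith
          · nlinarith [norm_nonneg y]
        simp only [hT]
        rw [← div_eq_mul_inv, sub_nonpos, one_le_div hqp]
        exact this
      simp only [hG, hP, hm]
      rw [max_eq_right hT0]; simp
    · by_contra! hc
      apply hy
      simp only [hG]
      rw [hχb _ (by nlinarith), mul_zero]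
  · intro y
    exact mul_nonneg (pow_nonneg (hm0 _) 3) (hχ0 _)
  · intro y hy
    have hqp := hqpos (‖y‖ ^ 2) (by nlinarith [sq_nonneg ‖y‖])
    have hq2 : q (‖y‖ ^ 2) ^ 2 = ‖y‖ ^ 2 + r ^ 2 := Real.sq_sqrt (by positivity)
    have h4 : 20 / 9 * r ≤ q (‖y‖ ^ 2) := by
      have := hy.1
      apply le_of_sq_le_sq _ hqp.le
      rw [hq2]; nlinarith
    have h5 : 1 / 10 ≤ m (‖y‖ ^ 2) := by
      apply le_max_of_le_left
      simp only [hT]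
      rw [← div_eq_mul_inv]
      have : 2 * r / q (‖y‖ ^ 2) ≤ 9 / 10 := by
        rw [div_le_iff₀ hqp]; linarith
      linarith
    simp only [hG, hP]
    rw [hχa _ (pow_le_pow_left₀ (norm_nonneg y) hy.2 2), mul_one]
    calc (1 / 1000 : ℝ) = (1 / 10) ^ 3 := by norm_num
      _ ≤ _ := pow_le_pow_left₀ (by norm_num) h5 3
  · intro y hy
    rw [hlap]
    have hs : ‖y‖ ^ 2 < a ^ 2 := pow_lt_pow_left₀ hy (norm_nonneg y) two_ne_zero
    have e0 : χ =ᶠ[nhds (‖y‖ ^ 2)] fun _ => 1 := by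
      filter_upwards [gt_mem_nhds hs] with s hs
      exact hχa s hs.le
    have e1 : deriv χ =ᶠ[nhds (‖y‖ ^ 2)] fun _ => 0 := by simpa using e0.deriv
    have e2 : deriv (deriv χ) (‖y‖ ^ 2) = 0 := by rw [e1.deriv_eq]; simp
    simp only [hG2, hG1]
    rw [e2, e1.eq_of_nhds, e0.eq_of_nhds]
    simpa using hsubh (‖y‖ ^ 2) (sq_nonneg _)
  · intro y hy
    rw [hlap]
    have hsa : a ^ 2 ≤ ‖y‖ ^ 2 := pow_le_pow_left₀ ha.le hy.1 2
    have hs1 : ‖y‖ ^ 2 ≤ 1 := by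
      have := hy.2
      nlinarith [norm_nonneg y]
    set s := ‖y‖ ^ 2
    have hs0 : 0 ≤ s := by positivity
    have b1 := hM1 s ⟨hs0, hs1⟩
    have b2 := hM2 s ⟨hs0, hs1⟩
    rw [Real.norm_eq_abs, abs_le] at b1 b2
    have hqa : a ≤ q s := Real.le_sqrt_of_sq_le (by linarith)
    have hP1b : P1 s ≤ 3 * (a ^ 3)⁻¹ := by
      have hT1b : T1 s ≤ (a ^ 3)⁻¹ := by
        simp only [hT1]
        rw [inv_pow]
        have : (q s ^ 3)⁻¹ ≤ (a ^ 3)⁻¹ := by gcongr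
        calc r * (q s ^ 3)⁻¹ ≤ 1 * (a ^ 3)⁻¹ := by
              gcongr; linarith
          _ = _ := one_mul _
      have := pow_le_one₀ (n := 2) (hm0 s) (hm1 s)
      calc P1 s = 3 * (m s ^ 2 * T1 s) := by simp only [hP1]; ring
        _ ≤ 3 * (1 * (a ^ 3)⁻¹) := by
            have := hT1n s
            gcongr
        _ = _ := by ring
    have hPb : P s ≤ 1 := pow_le_one₀ (hm0 s) (hm1 s)
    have hPn : 0 ≤ P s := pow_nonneg (hm0 s) 3
    have e : 4 * s * G2 s + 2 * n * G1 s = χ s * (4 * s * P2 s + 2 * n * P1 s) +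
        8 * (s * P1 s * deriv χ s) + P s * (4 * s * deriv (deriv χ) s + 2 * n * deriv χ s) := by
      simp only [hG2, hG1]; ring
    rw [e]
    have t1 := mul_nonneg (hχ0 s) (hsubh s hs0)
    have t2 : -(3 * (a ^ 3)⁻¹ * M1) ≤ s * P1 s * deriv χ s := by
      have u1 : s * P1 s ≤ 3 * (a ^ 3)⁻¹ := by nlinarith [hP1n s]
      have u0 : 0 ≤ s * P1 s := mul_nonneg hs0 (hP1n s)
      have : s * P1 s * M1 ≤ 3 * (a ^ 3)⁻¹ * M1 := mul_le_mul_of_nonneg_right u1 hM1n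
      nlinarith [mul_le_mul_of_nonneg_left b1.1 u0]
    have t3 : -(4 * M2 + 2 * n * M1) ≤ 4 * s * deriv (deriv χ) s + 2 * n * deriv χ s := by
      have u1 : -M2 ≤ s * deriv (deriv χ) s := by nlinarith [mul_le_mul_of_nonneg_left b2.1 hs0]
      have u2 : n * -M1 ≤ n * deriv χ s := mul_le_mul_of_nonneg_left b1.1 (Nat.cast_nonneg n)
      linarith
    have t4 : -(4 * M2 + 2 * n * M1) ≤
        P s * (4 * s * deriv (deriv χ) s + 2 * n * deriv χ s) := by
      have hK : 0 ≤ 4 * M2 + 2 * n * M1 := by positivity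
      nlinarith [mul_le_mul_of_nonneg_left t3 hPn, mul_le_mul_of_nonneg_right hPb hK]
    linarith

lemma unit_case (n : ℕ) (hn : 3 ≤ n) {a b c : ℝ} (ha : 0 < a) (hab : a < b) (hbc : b < c)
    (hc : c < 1) : ∃ k : ℝ, 0 < k ∧ ∀ r : ℝ, 0 < r → 2 * r < a → ∀ v : EE n → ℝ,
      ContDiffOn ℝ 2 v {y | r < ‖y‖ ∧ ‖y‖ < 1} →
      (∀ x : EE n, r < ‖x‖ → ‖x‖ < 1 → lap v x ≤ 0) →
      (∀ x : EE n, r < ‖x‖ → ‖x‖ < 1 → 0 ≤ v x) →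
      ∀ x ∈ KK n b c, k * ∫ y in KK n (2 * r) a, - lap v y ≤ v x := by
  obtain ⟨C, hC, htest⟩ := radial_test n hn ha hab (hbc.trans hc)
  obtain ⟨h, hh, hharn⟩ := harnack n (by omega) ha (hab.trans hbc) hc
  refine ⟨h / (1000 * C), by positivity, ?_⟩
  intro r hr hra v hv hl h0 x hx
  set U : Set (EE n) := {y | r < ‖y‖ ∧ ‖y‖ < 1} with hUdef
  have hU : IsOpen U := (isOpen_lt continuous_const continuous_norm).inter
      (isOpen_lt continuous_norm continuous_const)
  obtain ⟨p, hp, hps, hp0, hpk, hplap, hpC⟩ := htest r hr hra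
  have hKU : KK n (3 / 2 * r) b ⊆ U := fun y hy => ⟨by linarith [hy.1], by linarith [hy.2]⟩
  have hpcs : HasCompactSupport p := HasCompactSupport.of_support_subset_isCompact
    (KK_compact n _ _) ((subset_tsupport p).trans hps)
  have hg := green hU hv hp hpcs (hps.trans hKU)
  have hlapc := lap_contOn hU hv
  have hI1 : Integrable (fun y => lap v y * p y) :=
    integrable_mul_of_tsupport hU hlapc hp.continuous hpcs (hps.trans hKU)
  have hlap0 : ∀ y, y ∉ tsupport p → lap p y = 0 := by
    intro y hy
    unfold lap
    refine Finset.sum_eq_zero fun i _ => ?_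
    have : y ∉ tsupport (fun z => fderiv ℝ (fun z => fderiv ℝ p z (ee i)) z (ee i)) := fun hc =>
      hy (tsupport_fderiv_apply_subset ℝ _ (tsupport_fderiv_apply_subset ℝ _ hc))
    have h := image_eq_zero_of_notMem_tsupport this
    exact h
  have hI2 : Integrable (fun y => v y * lap p y) := by
    have hts : tsupport (lap p) ⊆ tsupport p :=
      closure_minimal (fun y hy => by by_contra hc; exact hy (hlap0 y hc)) (isClosed_tsupport p)
    apply integrable_mul_of_tsupport hU hv.continuousOn
    · exact continuousOn_univ.1 (lap_contOn isOpen_univ hp.contDiffOn)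
    · exact HasCompactSupport.of_support_subset_isCompact
        (KK_compact n _ _) ((subset_tsupport _).trans (hts.trans hps))
    · exact hts.trans (hps.trans hKU)
  have hEU : KK n (2 * r) a ⊆ U := fun y hy => ⟨by linarith [hy.1], by linarith [hy.2]⟩
  have hK'U : KK n a b ⊆ U := fun y hy => ⟨by linarith [hy.1], by linarith [hy.2]⟩
  have hKcU : KK n a c ⊆ U := fun y hy => ⟨by linarith [hy.1], by linarith [hy.2]⟩
  have hK'c : KK n a b ⊆ KK n a c := fun y hy => ⟨hy.1, by linarith [hy.2]⟩
  have hmE := (KK_compact n (2 * r) a).measurableSet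
  have hmK := (KK_compact n a b).measurableSet
  have hmKc := (KK_compact n a c).measurableSet
  have hIc : IntegrableOn v (KK n a c) :=
    (hv.continuousOn.mono hKcU).integrableOn_compact (KK_compact n a c)
  -- lower bound
  have s1 : 1 / 1000 * ∫ y in KK n (2 * r) a, - lap v y ≤ ∫ y, -(lap v y * p y) := by
    calc 1 / 1000 * ∫ y in KK n (2 * r) a, - lap v y
        = ∫ y in KK n (2 * r) a, 1 / 1000 * - lap v y := (integral_const_mul _ _).symm
      _ ≤ ∫ y in KK n (2 * r) a, -(lap v y * p y) := by
          apply setIntegral_mono_on _ hI1.neg.integrableOn hmE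
          · intro y hy
            have := hl y (hEU hy).1 (hEU hy).2
            change 1 / 1000 * - lap v y ≤ -(lap v y * p y)
            nlinarith [hpk y hy]
          · exact ((hlapc.mono hEU).neg.integrableOn_compact (KK_compact n (2 * r) a)).const_mul _
      _ ≤ ∫ y, -(lap v y * p y) := by
          apply setIntegral_le_integral hI1.neg
          apply Filter.Eventually.of_forall
          intro y
          change 0 ≤ -(lap v y * p y)
          by_cases hy : y ∈ tsupport p
          · have hyU := hKU (hps hy)
            nlinarith [hl y hyU.1 hyU.2, hp0 y]
          · simp [image_eq_zero_of_notMem_tsupport hy]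
  have s2 : ∫ y, -(lap v y * p y) ≤ C * ∫ y in KK n a b, v y := by
    rw [integral_neg, ← hg, ← integral_neg, ← integral_const_mul, ← integral_indicator hmK]
    apply integral_mono hI2.neg
    · exact (integrable_indicator_iff hmK).2 ((hIc.mono_set hK'c).const_mul C)
    · intro y
      change -(v y * lap p y) ≤ _
      by_cases hyK : y ∈ KK n a b
      · rw [indicator_of_mem hyK]
        nlinarith [hpC y hyK, h0 y (hK'U hyK).1 (hK'U hyK).2]
      · rw [indicator_of_notMem hyK]
        by_cases hy : y ∈ tsupport p
        · have hyU := hKU (hps hy)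
          have : ‖y‖ < a := by
            by_contra! hc
            exact hyK ⟨hc, (hps hy).2⟩
          nlinarith [hplap y this, h0 y hyU.1 hyU.2]
        · rw [hlap0 y hy]; simp
  have s3 : ∫ y in KK n a b, v y ≤ ∫ y in KK n a c, v y := by
    apply setIntegral_mono_set hIc
    · filter_upwards [ae_restrict_mem hmKc] with y hy
      exact h0 y (hKcU hy).1 (hKcU hy).2
    · exact Filter.Eventually.of_forall hK'c
  have hAU : AA n a ⊆ U := fun y hy => ⟨by linarith [hy.1], hy.2⟩
  have s4 := hharn v ⟨hv.mono hAU, fun y hy => hl y (hAU hy).1 (hAU hy).2,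
    fun y hy => h0 y (hAU hy).1 (hAU hy).2⟩ x ⟨by linarith [hx.1], hx.2⟩
  refine le_trans ?_ s4
  rw [div_mul_eq_mul_div, div_le_iff₀ (by positivity), mul_assoc]
  apply mul_le_mul_of_nonneg_left _ hh.le
  nlinarith

open scoped Pointwise in
lemma KK_integral_smul {n : ℕ} {R : ℝ} (hR : 0 < R) (r ρ₀ : ℝ) (g : EE n → ℝ) :
    ∫ y in KK n (2 * (r / R)) ρ₀, g (R • y) =
      (R ^ n)⁻¹ * ∫ y in KK n (2 * r) (ρ₀ * R), g y := by
  have hRS : R • KK n (2 * (r / R)) ρ₀ = KK n (2 * r) (ρ₀ * R) := by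
    ext y
    rw [mem_smul_set_iff_inv_smul_mem₀ hR.ne']
    change (_ ≤ _ ∧ _ ≤ _) ↔ (_ ≤ _ ∧ _ ≤ _)
    rw [norm_smul, norm_inv, Real.norm_of_nonneg hR.le, ← div_eq_inv_mul, le_div_iff₀ hR,
      div_le_iff₀ hR, show 2 * (r / R) * R = 2 * r by field_simp]
  have e1 := Measure.setIntegral_comp_smul (volume : Measure (EE n)) g
    (R := R) (KK n (2 * (r / R)) ρ₀) hR.ne'
  rw [hRS, finrank_euclideanSpace_fin, abs_of_pos (by positivity), smul_eq_mul] at e1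
  exact e1

/-- scaled quantitative minimum principle on the annulus `B_R \ B_r`. -/
theorem scaled_annulus_min_principle (n : ℕ) (hn : 3 ≤ n) (ρ₀ ρ₁ ρ₂ : ℝ)
    (h01 : ρ₀ < ρ₁) (h12 : ρ₁ < ρ₂) (h21 : ρ₂ < 1) :
    ∃ C : ℝ, 1 < C ∧
      ∀ r R : ℝ, 0 < r → r < R / 2 → 2 * r / R < ρ₀ →
        ∀ v f : EuclideanSpace ℝ (Fin n) → ℝ,
          ContDiffOn ℝ 2 v (closure (ball (0 : EuclideanSpace ℝ (Fin n)) R \ closedBall 0 r)) →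
          ContinuousOn f (closure (ball (0 : EuclideanSpace ℝ (Fin n)) R \ closedBall 0 r)) →
          (∀ x ∈ (ball (0 : EuclideanSpace ℝ (Fin n)) R \ closedBall 0 r), - lap v x = f x) →
          (∀ x ∈ (ball (0 : EuclideanSpace ℝ (Fin n)) R \ closedBall 0 r), 0 ≤ f x) →
          (∀ x ∈ frontier (ball (0 : EuclideanSpace ℝ (Fin n)) R \ closedBall 0 r), 0 ≤ v x) →
          ∀ x : EuclideanSpace ℝ (Fin n), ρ₁ * R ≤ ‖x‖ → ‖x‖ ≤ ρ₂ * R →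
            (1 / (C * R ^ (n - 2))) *
                ∫ y in {y : EuclideanSpace ℝ (Fin n) | 2 * r ≤ ‖y‖ ∧ ‖y‖ ≤ ρ₀ * R}, f y
              ≤ v x := by
  rcases le_or_gt ρ₀ 0 with hρ | hρ
  · refine ⟨2, by norm_num, fun r R hr hrR h => ?_⟩
    have hR : 0 < R := by linarith
    have : 0 < 2 * r / R := by positivity
    linarith
  obtain ⟨k, hk, hunit⟩ := unit_case n hn hρ h01 h12 h21
  refine ⟨k⁻¹ + 1, by have := inv_pos.2 hk; linarith, ?_⟩
  intro r R hr hrR hrρ v f hv _ hlf hf0 hfr x hx1 hx2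
  have hR : 0 < R := by linarith
  set U := ball (0 : EE n) R \ closedBall 0 r with hUdef
  have hU : IsOpen U := isOpen_ball.sdiff isClosed_closedBall
  have hUmem : ∀ y : EE n, y ∈ U ↔ r < ‖y‖ ∧ ‖y‖ < R := by
    intro y; simp [hUdef, and_comm]
  have hvU : ContDiffOn ℝ 2 v U := hv.mono subset_closure
  have hlap : ∀ y ∈ U, lap v y ≤ 0 := fun y hy => by linarith [hlf y hy, hf0 y hy]
  have hv0 : ∀ y ∈ U, 0 ≤ v y := min_principle (by omega) hU
    (isBounded_ball.subset sdiff_subset) hvU hv.continuousOn hlap hfr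
  have hsc : ∀ y : EE n, r / R < ‖y‖ → ‖y‖ < 1 → R • y ∈ U := by
    intro y h1 h2
    rw [hUmem, norm_smul, Real.norm_of_nonneg hR.le]
    rw [div_lt_iff₀ hR] at h1
    constructor <;> nlinarith
  have key := hunit (r / R) (by positivity) (by rw [← mul_div_assoc]; exact hrρ)
    (fun y => v (R • y))
    (hvU.comp (contDiff_const_smul R).contDiffOn (fun y hy => hsc y hy.1 hy.2))
    (fun y h1 h2 => by
      rw [lap_comp_smul]
      exact mul_nonpos_of_nonneg_of_nonpos (sq_nonneg R) (hlap _ (hsc y h1 h2)))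
    (fun y h1 h2 => hv0 _ (hsc y h1 h2))
    (R⁻¹ • x) (by
      have : ‖R⁻¹ • x‖ = ‖x‖ / R := by
        rw [norm_smul, norm_inv, Real.norm_of_nonneg hR.le, ← div_eq_inv_mul]
      constructor
      · rw [this, le_div_iff₀ hR]; exact hx1
      · rw [this, div_le_iff₀ hR]; exact hx2)
  simp only [smul_smul, mul_inv_cancel₀ hR.ne', one_smul, lap_comp_smul] at key
  set S : Set (EE n) := {y : EE n | 2 * r ≤ ‖y‖ ∧ ‖y‖ ≤ ρ₀ * R} with hS
  have hSK : S = KK n (2 * r) (ρ₀ * R) := rfl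
  have hmS : MeasurableSet S := (KK_compact n (2 * r) (ρ₀ * R)).measurableSet
  have hSU : S ⊆ U := fun y hy => by
    rw [hUmem]
    have h1 : 2 * r ≤ ‖y‖ := hy.1
    have h2 : ‖y‖ ≤ ρ₀ * R := hy.2
    constructor
    · linarith
    · nlinarith
  have hintg : ∫ y in KK n (2 * (r / R)) ρ₀, -(R ^ 2 * lap v (R • y)) =
      R ^ 2 * ((R ^ n)⁻¹ * ∫ y in S, f y) := by
    have e1 := KK_integral_smul (n := n) hR r ρ₀ (fun y => - lap v y)
    rw [← hSK, setIntegral_congr_fun hmS (fun y hy => hlf y (hSU hy))] at e1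
    rw [← e1, ← integral_const_mul]
    simp only [mul_neg]
  rw [hintg] at key
  have hI : 0 ≤ ∫ y in S, f y := setIntegral_nonneg hmS fun y hy => hf0 y (hSU hy)
  refine le_trans ?_ key
  have hRn : R ^ n = R ^ 2 * R ^ (n - 2) := by rw [← pow_add]; congr 1; omega
  have e2 : k * (R ^ 2 * ((R ^ n)⁻¹ * ∫ y in S, f y)) =
      (1 / (k⁻¹ * R ^ (n - 2))) * ∫ y in S, f y := by
    rw [hRn]; field_simp
  rw [e2]
  apply mul_le_mul_of_nonneg_right _ hI
  apply one_div_le_one_div_of_le (by positivity)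
  apply mul_le_mul_of_nonneg_right _ (by positivity)
  linarith
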